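/- For every positive integer k: φ_R(G_k^{gl(m+1|n)}) = A_k(1)(E⊗1) + (m+1−n)R^k + Σ_{g=0}^{k−1} C(k,g) R^g (1⊗G_{k−g}^{gl(m|n)}) − Σ_{s=2}^{k} (1⊗G_{s−1}^{gl(m|n)}) A_k(s), where A_k(s) = Σ_{g=0}^{k−s} C(k,g) R^g R_2^{k−s−g} and R_2 = (E+m−n)⊗1. -/

import Mathlib

set_option maxHeartbeats 1000000
set_option synthInstance.maxHeartbeats 400000

noncomputable section
open scoped TensorProduct

/-- The index set `I = {1,…,m,1̄,…,n̄}` of `gl(m|n)`; `Sum.inl` are the even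
(unbarred) indices, `Sum.inr` the odd (barred) ones.  The index set
`Î = {0} ∪ I` of `gl(m+1|n)` is realized as `Ind (m+1) n`, with `0 = Sum.inl 0`. -/
abbrev Ind (m n : ℕ) := Fin m ⊕ Fin n

/-- Parity of an index, as `0` or `1`. -/
def pI {m n : ℕ} : Ind m n → ℕ := Sum.elim (fun _ => 0) (fun _ => 1)

/-- The total order `1 < ⋯ < m < 1̄ < ⋯ < n̄` on `I` (and, with `m+1` in place of `m`,
the order `0 < 1 < ⋯ < m < 1̄ < ⋯ < n̄` on `Î`). -/
def iltI {m n : ℕ} : Ind m n → Ind m n → Prop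
  | Sum.inl a, Sum.inl b => a < b
  | Sum.inl _, Sum.inr _ => True
  | Sum.inr _, Sum.inl _ => False
  | Sum.inr a, Sum.inr b => a < b

/-- The distinguished index `0` of `Î`. -/
def z0 {m n : ℕ} : Ind (m+1) n := Sum.inl 0

/-- The inclusion `I ↪ Î`. -/
def emb {m n : ℕ} : Ind m n → Ind (m+1) n := Sum.map Fin.succ id

lemma emb_injective {m n : ℕ} : Function.Injective (emb (m := m) (n := n)) := by
  intro a b h
  cases a <;> cases b <;> simp [emb, Fin.succ_inj] at h <;> simp [h]

lemma emb_ne_z0 {m n : ℕ} (a : Ind m n) : emb a ≠ z0 := by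
  cases a <;> simp [emb, z0, Fin.succ_ne_zero]

/-- Builds a linear map out of a space with basis `α` from a function on basis vectors. -/
def mkOp {α M : Type} [AddCommGroup M] [Module ℂ M] (g : α → M) : (α →₀ ℂ) →ₗ[ℂ] M :=
  Finsupp.lsum ℂ fun x => LinearMap.toSpanSingleton ℂ M (g x)

/-- Number of odd variables occurring before position `i`. -/
def cntB {n : ℕ} (b : Fin n → Bool) (i : Fin n) : ℕ :=
  (Finset.univ.filter fun j => j < i ∧ b j = true).card

/-- Number of odd variables occurring. -/
def cntA {n : ℕ} (b : Fin n → Bool) : ℕ := (Finset.univ.filter fun j => b j = true).card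


/-- The defining (super-)commutation relations of `gl`:
`e_ij e_kl − (−1)^{(|i|+|j|)(|k|+|l|)} e_kl e_ij = δ_jk e_il − (−1)^{(|i|+|j|)(|k|+|l|)} δ_li e_kj`. -/
inductive glRel (ι : Type) (p : ι → ℕ) [DecidableEq ι] :
    FreeAlgebra ℂ (ι × ι) → FreeAlgebra ℂ (ι × ι) → Prop
  | basic (i j k l : ι) : glRel ι p
      (FreeAlgebra.ι ℂ (i, j) * FreeAlgebra.ι ℂ (k, l)
        - ((-1 : ℂ) ^ ((p i + p j) * (p k + p l))) •
            (FreeAlgebra.ι ℂ (k, l) * FreeAlgebra.ι ℂ (i, j)))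
      ((if j = k then FreeAlgebra.ι ℂ (i, l) else 0)
        - ((-1 : ℂ) ^ ((p i + p j) * (p k + p l))) •
            (if l = i then FreeAlgebra.ι ℂ (k, j) else 0))

/-- The universal enveloping superalgebra of the general linear Lie superalgebra with
index set `ι` and parity `p`, presented by generators `e_ij` and the super-commutator
relations. -/
abbrev UEA (ι : Type) (p : ι → ℕ) [DecidableEq ι] : Type := RingQuot (glRel ι p)

/-- The generator `e_ij` of `UEA ι p`. -/
def gen {ι : Type} (p : ι → ℕ) [DecidableEq ι] (i j : ι) : UEA ι p :=
  RingQuot.mkAlgHom ℂ (glRel ι p) (FreeAlgebra.ι ℂ (i, j))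

/-- Monomials `t_0^{k} t^e t̄^b` of `F = ℂ[t_0^{±1},t_1,…,t_m] ⊗ Λ_n`. -/
abbrev FMon (m n : ℕ) := ℤ × (Fin m → ℕ) × (Fin n → Bool)

/-- `F = ℂ[t_0^{±1},t_1,…,t_m] ⊗ Λ_n` as the vector space with basis the monomials. -/
abbrev FSp (m n : ℕ) : Type := FMon m n →₀ ℂ

/-- The basis monomial of `F` attached to `x`. -/
def fmono {m n : ℕ} (x : FMon m n) : FSp m n := Finsupp.single x 1

/-- Left multiplication by `t_i/t_0` for an even index `i ∈ {1,…,m}`. -/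
def opDivE {m n : ℕ} (i : Fin m) : Module.End ℂ (FSp m n) :=
  mkOp fun x => fmono (x.1 - 1, Function.update x.2.1 i (x.2.1 i + 1), x.2.2)

/-- Left multiplication by `t_ī/t_0` for an odd index `ī`. -/
def opDivO {m n : ℕ} (i : Fin n) : Module.End ℂ (FSp m n) :=
  mkOp fun x => if x.2.2 i then 0 else
    ((-1 : ℂ) ^ (cntB x.2.2 i)) • fmono (x.1 - 1, x.2.1, Function.update x.2.2 i true)

/-- The operator `t_0 ∂_0`. -/
def opPar0 {m n : ℕ} : Module.End ℂ (FSp m n) :=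
  mkOp fun x => (x.1 : ℂ) • fmono x

/-- The operator `t_0 ∂_i` for an even index `i ∈ {1,…,m}`. -/
def opParE {m n : ℕ} (i : Fin m) : Module.End ℂ (FSp m n) :=
  mkOp fun x => (x.2.1 i : ℂ) • fmono (x.1 + 1, Function.update x.2.1 i (x.2.1 i - 1), x.2.2)

/-- The operator `t_0 ∂_ī` for an odd index `ī`. -/
def opParO {m n : ℕ} (i : Fin n) : Module.End ℂ (FSp m n) :=
  mkOp fun x => if x.2.2 i then
    ((-1 : ℂ) ^ (cntB x.2.2 i)) • fmono (x.1 + 1, x.2.1, Function.update x.2.2 i false) else 0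

/-- The multiplication operators `t_i/t_0`, `i ∈ I`. -/
def opDiv {m n : ℕ} : Ind m n → Module.End ℂ (FSp m n) := Sum.elim opDivE opDivO

/-- The operators `t_0 ∂_i`, `i ∈ Î`. -/
def opPar {m n : ℕ} : Ind (m+1) n → Module.End ℂ (FSp m n) :=
  Sum.elim (Fin.cases opPar0 opParE) opParO

/-- The multiplication operators `t_i/t_0` for `i ∈ Î` (equal to `1` for `i = 0`). -/
def opDivB {m n : ℕ} : Ind (m+1) n → Module.End ℂ (FSp m n) :=
  Sum.elim (Fin.cases 1 opDivE) opDivO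

/-- The generators of `D'(m|n)`. -/
def Dgens (m n : ℕ) : Set (Module.End ℂ (FSp m n)) := Set.range opDiv ∪ Set.range opPar

/-- The superalgebra `D'(m|n)` of differential operators on `F`, i.e. the subalgebra of
operators on `F` generated by `t_i/t_0` (`i ∈ I`) and `t_0∂_i` (`i ∈ Î`). -/
def Dprime (m n : ℕ) : Subalgebra ℂ (Module.End ℂ (FSp m n)) := Algebra.adjoin ℂ (Dgens m n)

/-- `t_i/t_0` as an element of `D'(m|n)`. -/
def tdiv {m n : ℕ} (i : Ind m n) : Dprime m n :=
  ⟨opDiv i, Algebra.subset_adjoin (Or.inl ⟨i, rfl⟩)⟩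

/-- `t_0∂_i` as an element of `D'(m|n)`. -/
def tpar {m n : ℕ} (i : Ind (m+1) n) : Dprime m n :=
  ⟨opPar i, Algebra.subset_adjoin (Or.inr ⟨i, rfl⟩)⟩

/-- `t_i/t_0` for `i ∈ Î` as an element of `D'(m|n)`. -/
def tdivB {m n : ℕ} : Ind (m+1) n → Dprime m n :=
  Sum.elim (Fin.cases 1 fun i => tdiv (Sum.inl i)) fun i => tdiv (Sum.inr i)

/-- The operator `t_a∂_b = (t_a/t_0)(t_0∂_b)` of `D'(m|n)`, for `a, b ∈ Î`. -/
def tdel {m n : ℕ} (a b : Ind (m+1) n) : Dprime m n := tdivB a * tpar b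

/-- The Euler operator `E = Σ_{i∈Î} t_i∂_i ∈ D'(m|n)`. -/
def En (m n : ℕ) : Dprime m n := ∑ i : Ind (m+1) n, tdel i i

noncomputable instance instDprimeRing (m n : ℕ) : Ring (Dprime m n) :=
  @Subalgebra.toRing ℂ (Module.End ℂ (FSp m n)) inferInstance inferInstance inferInstance _

noncomputable instance instDprimeAlgebra (m n : ℕ) : Algebra ℂ (Dprime m n) :=
  @Subalgebra.algebra ℂ (Module.End ℂ (FSp m n)) inferInstance inferInstance inferInstance _

/-- The super tensor product `D'(m|n) ⊗ U(gl(m|n))`, axiomatized: an algebra `T` together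
with algebra maps `d ↦ d⊗1`, `u ↦ 1⊗u`, such that the induced linear map
`D'(m|n) ⊗_ℂ U(gl(m|n)) → T` is a linear isomorphism and such that the Koszul sign rule
`(1⊗u)(d⊗1) = (−1)^{|u||d|}(d⊗1)(1⊗u)` holds on (super-)generators. -/
structure SuperTensor (m n : ℕ) where
  T : Type
  [ringT : Ring T]
  [algT : Algebra ℂ T]
  inD : Dprime m n →ₐ[ℂ] T
  inU : UEA (Ind m n) pI →ₐ[ℂ] T
  equiv : ((Dprime m n) ⊗[ℂ] (UEA (Ind m n) pI)) ≃ₗ[ℂ] T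
  equiv_tmul : ∀ (d : Dprime m n) (u : UEA (Ind m n) pI), equiv (d ⊗ₜ u) = inD d * inU u
  comm_div : ∀ (i j k : Ind m n),
    inU (gen pI i j) * inD (tdiv k) =
      ((-1 : ℂ) ^ ((pI i + pI j) * pI k)) • (inD (tdiv k) * inU (gen pI i j))
  comm_par : ∀ (i j : Ind m n) (k : Ind (m+1) n),
    inU (gen pI i j) * inD (tpar k) =
      ((-1 : ℂ) ^ ((pI i + pI j) * pI k)) • (inD (tpar k) * inU (gen pI i j))

attribute [instance] SuperTensor.ringT SuperTensor.algT

/-- The predicate expressing that `φ : U(gl(m+1|n)) → D'(m|n) ⊗ U(gl(m|n))` is given on the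
generators `e_ab` by the formulas of Theorem 3.1 (for the central element `R`). -/
def IsPhi {m n : ℕ} (ST : SuperTensor m n) (R : ST.T)
    (φ : UEA (Ind (m+1) n) pI →ₐ[ℂ] ST.T) : Prop :=
  (∀ a b : Ind m n, φ (gen pI (emb a) (emb b)) =
      ST.inD (tdel (emb a) (emb b)) + ST.inU (gen pI a b)
        + (if a = b then ((-1 : ℂ) ^ (pI a * pI b)) • R else 0)) ∧
  (∀ a : Ind m n, φ (gen pI (emb a) z0) =
      ST.inD (tdel (emb a) z0)
        - ∑ j : Ind m n, ((-1 : ℂ) ^ (pI a * pI j)) • (ST.inD (tdiv j) * ST.inU (gen pI a j))) ∧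
  (∀ b : Ind m n, φ (gen pI z0 (emb b)) = ST.inD (tdel z0 (emb b))) ∧
  (φ (gen pI z0 z0) = ST.inD (tdel z0 z0) + R)

/-- The generating set of `U(sl(m+1|n))` inside `U(gl(m+1|n))`: the `e_ij` with `i ≠ j`
together with `e_00 − (−1)^{|a|} e_aa` for `a ∈ I`. -/
def slSet (m n : ℕ) : Set (UEA (Ind (m+1) n) pI) :=
  {x | (∃ i j : Ind (m+1) n, i ≠ j ∧ x = gen pI i j) ∨
    (∃ a : Ind m n, x = gen pI z0 z0 - ((-1 : ℂ) ^ (pI a)) • gen pI (emb a) (emb a))}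

/-- `U(sl(m+1|n))`, realized as the subalgebra of `U(gl(m+1|n))` generated by `sl(m+1|n)`. -/
def Usl (m n : ℕ) : Subalgebra ℂ (UEA (Ind (m+1) n) pI) := Algebra.adjoin ℂ (slSet m n)

lemma mem_gen_ne {m n : ℕ} {i j : Ind (m+1) n} (h : i ≠ j) : gen pI i j ∈ Usl m n :=
  Algebra.subset_adjoin (Or.inl ⟨i, j, h, rfl⟩)

lemma mem_h {m n : ℕ} (a : Ind m n) :
    gen pI z0 z0 - ((-1 : ℂ) ^ (pI a)) • gen pI (emb a) (emb a) ∈ Usl m n :=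
  Algebra.subset_adjoin (Or.inr ⟨a, rfl⟩)

/-- The predicate expressing that `ψ : U(sl(m+1|n)) → D'(m|n) ⊗ U(gl(m|n))` is given on the
generators by the formulas of Corollary 3.2 (the homomorphism `φ^s`). -/
def IsPhiS {m n : ℕ} (ST : SuperTensor m n) (ψ : Usl m n →ₐ[ℂ] ST.T) : Prop :=
  (∀ (a b : Ind m n) (h : a ≠ b),
    ψ ⟨gen pI (emb a) (emb b), mem_gen_ne fun he => h (emb_injective he)⟩ =
      ST.inD (tdel (emb a) (emb b)) + ST.inU (gen pI a b)) ∧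
  (∀ a : Ind m n, ψ ⟨gen pI (emb a) z0, mem_gen_ne (emb_ne_z0 a)⟩ =
      ST.inD (tdel (emb a) z0)
        - ∑ j : Ind m n, ((-1 : ℂ) ^ (pI a * pI j)) • (ST.inD (tdiv j) * ST.inU (gen pI a j))) ∧
  (∀ b : Ind m n, ψ ⟨gen pI z0 (emb b), mem_gen_ne (Ne.symm (emb_ne_z0 b))⟩ =
      ST.inD (tdel z0 (emb b))) ∧
  (∀ a : Ind m n, ψ ⟨gen pI z0 z0 - ((-1 : ℂ) ^ (pI a)) • gen pI (emb a) (emb a), mem_h a⟩ =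
      ST.inD (tdel (m:=m) (n:=n) z0 z0 - ((-1 : ℂ) ^ (pI a)) • tdel (emb a) (emb a))
        - ((-1 : ℂ) ^ (pI a)) • ST.inU (gen pI a a))

/-- The first Gelfand invariant `G₁ = Σ_i e_ii`. -/
def G1 (ι : Type) (p : ι → ℕ) [DecidableEq ι] [Fintype ι] : UEA ι p := ∑ i : ι, gen p i i

/-- The distinguished central element `R₁ = −(1/(m−n+1))(E⊗1 + 1⊗G₁)`. -/
def R1elt {m n : ℕ} (ST : SuperTensor m n) : ST.T :=
  -(1 / ((m : ℂ) - n + 1)) • (ST.inD (En m n) + ST.inU (G1 (Ind m n) pI))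

/-- The chain `a, v_1, …, v_k, b`. -/
def chainF {ι : Type} (a b : ι) {k : ℕ} (v : Fin k → ι) : Fin (k+2) → ι :=
  Fin.cons a (Fin.snoc v b)

/-- The elements `r_k(a,b) = Σ (−1)^{|i_1|+⋯+|i_{k-1}|} e_{a i_1} e_{i_1 i_2} ⋯ e_{i_{k-1} b}`,
with `r_0(a,b) = δ_{ab}(−1)^{|a||b|}`. -/
def rElt {ι A : Type} [Fintype ι] [DecidableEq ι] [Ring A] [Algebra ℂ A]
    (e : ι → ι → A) (p : ι → ℕ) : ℕ → ι → ι → A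
  | 0 => fun a b => if a = b then ((-1 : ℂ) ^ (p a * p b)) • (1 : A) else 0
  | (k+1) => fun a b => ∑ v : Fin k → ι, ((-1 : ℂ) ^ (∑ t, p (v t))) •
      (List.ofFn fun t : Fin (k+1) =>
        e (chainF a b v t.castSucc) (chainF a b v t.succ)).prod

/-- The Gelfand invariants `G_k = Σ_i r_k(i,i)` (for `k ≥ 1`). -/
def gelf {ι A : Type} [Fintype ι] [DecidableEq ι] [Ring A] [Algebra ℂ A]
    (e : ι → ι → A) (p : ι → ℕ) (k : ℕ) : A :=
  ∑ i : ι, rElt e p k i i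

/-- `R₂ = (E+m−n)⊗1`. -/
def R2elt {m n : ℕ} (ST : SuperTensor m n) : ST.T :=
  ST.inD (En m n) + ((m : ℂ) - n) • 1

/-- `A_k(s) = Σ_{g=0}^{k−s} C(k,g) R^g R₂^{k−s−g}`. -/
def AkT {m n : ℕ} (ST : SuperTensor m n) (R : ST.T) (k s : ℕ) : ST.T :=
  ∑ g ∈ Finset.range (k - s + 1), (k.choose g : ℂ) • (R ^ g * R2elt ST ^ (k - s - g))

/-!
The signs of the Gelfand invariant `G_k` make it the supertrace of the `k`-th power of the matrix
`((-1)^{|b|} e_ab)`. Under `φ_R` this matrix becomes `R + x q + U`, where `x` is the column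
`(t_i/t_0)`, `q` is the row `((-1)^{|i|} t_0∂_i)`, and `U` is the matrix of `gl(m|n)` acting on the
quotient of the free module of rank `m+1|n` by `x`. Hence `U x = 0`, so that
`(x q + U)^k = Σ_i (x q)^{k-i} U^i`, while `(x q)^{l+1} = (q x)^l x q` with
`q x = E + m - n = R₂`. The supertraces of `x q` and `U^i` are `E` and `G_i`, and that of
`x q U^i` is `-G_i`, since only the commutators `[∂_b, t_b]` survive. Expanding in powers of the
central element `R` gives the formula.
-/

open Matrix Finset

lemma neg_one_pow_mul_self {M : Type*} [Monoid M] [HasDistribNeg M] (n : ℕ) :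
    (-1 : M) ^ n * (-1) ^ n = 1 := by
  rw [← pow_add, Even.neg_one_pow ⟨n, rfl⟩]

section MatrixAlgebra

variable {ι κ A : Type*}

lemma add_pow_eq_sum_of_mul_eq_zero [Semiring A] {a b : A} (h : b * a = 0) (k : ℕ) :
    (a + b) ^ k = ∑ i ∈ range (k + 1), a ^ (k - i) * b ^ i := by
  induction k with
  | zero => simp
  | succ k ih =>
    have mul_left_summand : ∀ i, a ^ (k - (i + 1)) * b ^ (i + 1) * a = 0 := fun i => by
      rw [pow_succ, mul_assoc, mul_assoc, h, mul_zero, mul_zero]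
    rw [pow_succ, ih, mul_add, sum_range_succ' _ (k + 1), add_comm]
    congr 1
    · rw [sum_mul]
      exact sum_congr rfl fun i _ => by rw [Nat.add_sub_add_right, mul_assoc, ← pow_succ]
    · rw [sum_mul, sum_range_succ', sum_eq_zero fun i _ => mul_left_summand i]
      simp [pow_succ]

lemma vecMulVec_mul_self [Fintype ι] [DecidableEq ι] [Semiring A] {x q : ι → A}
    (h : ∀ i, Commute (q ⬝ᵥ x) (x i)) :
    vecMulVec x q * vecMulVec x q = scalar ι (q ⬝ᵥ x) * vecMulVec x q := by
  ext i j
  simp [vecMulVec_mul_vecMulVec, vecMulVec_apply, ← mul_assoc, (h i).eq]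

lemma vecMulVec_pow_succ [Fintype ι] [DecidableEq ι] [Semiring A] {x q : ι → A}
    (h : ∀ i, Commute (q ⬝ᵥ x) (x i)) (k : ℕ) :
    vecMulVec x q ^ (k + 1) = scalar ι ((q ⬝ᵥ x) ^ k) * vecMulVec x q := by
  induction k with
  | zero => simp
  | succ k ih =>
    rw [pow_succ, ih, mul_assoc, vecMulVec_mul_self h, ← mul_assoc, ← map_mul, ← pow_succ]

lemma mul_mul_pow_succ [Fintype ι] [DecidableEq ι] [Fintype κ] [DecidableEq κ] [Semiring A]
    {P : Matrix κ ι A} {Q : Matrix ι κ A} (h : Q * P = 1) (u : Matrix ι ι A) (k : ℕ) :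
    (P * u * Q) ^ (k + 1) = P * u ^ (k + 1) * Q := by
  induction k with
  | zero => simp
  | succ k ih =>
    calc (P * u * Q) ^ (k + 2) = P * u ^ (k + 1) * (Q * P) * u * Q := by
          rw [pow_succ, ih]; simp only [Matrix.mul_assoc]
      _ = P * u ^ (k + 2) * Q := by rw [h, Matrix.mul_one, Matrix.mul_assoc P, ← pow_succ]

lemma submatrix_equiv_pow [Fintype ι] [DecidableEq ι] [Fintype κ] [DecidableEq κ] [Semiring A]
    (M : Matrix ι ι A) (e : κ ≃ ι) (k : ℕ) : M.submatrix e e ^ k = (M ^ k).submatrix e e :=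
  (map_pow (reindexRingEquiv A e.symm) M k).symm

end MatrixAlgebra

section SuperTrace

variable {ι κ A B : Type*} (𝕜 : Type*) [CommRing 𝕜] [Fintype ι]

/-- The supertrace `Σ_i (-1)^{|i|} M_ii` of a matrix whose indices have parity `p`. -/
def superTrace [AddCommMonoid A] [Module 𝕜 A] (p : ι → ℕ) : Matrix ι ι A →ₗ[𝕜] A :=
  ∑ i, ((-1 : 𝕜) ^ p i) • entryLinearMap 𝕜 A i i

lemma superTrace_apply [AddCommMonoid A] [Module 𝕜 A] (p : ι → ℕ) (M : Matrix ι ι A) :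
    superTrace 𝕜 p M = ∑ i, ((-1 : 𝕜) ^ p i) • M i i := by
  simp [superTrace]

lemma superTrace_submatrix_equiv [Fintype κ] [AddCommMonoid A] [Module 𝕜 A] (p : ι → ℕ)
    (e : κ ≃ ι) (M : Matrix ι ι A) :
    superTrace 𝕜 (p ∘ e) (M.submatrix e e) = superTrace 𝕜 p M := by
  simp only [superTrace_apply, submatrix_apply, Function.comp_apply]
  exact e.sum_comp fun i => ((-1 : 𝕜) ^ p i) • M i i

variable [Ring A] [Algebra 𝕜 A] [Ring B] [Algebra 𝕜 B] [DecidableEq ι]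

lemma map_superTrace_pow (f : A →ₐ[𝕜] B) (p : ι → ℕ) (M : Matrix ι ι A) (k : ℕ) :
    f (superTrace 𝕜 p (M ^ k)) = superTrace 𝕜 p (M.map f ^ k) := by
  have map_pow_entry : ∀ i, f ((M ^ k) i i) = (M.map f ^ k) i i := fun i =>
    congrFun₂ (map_pow f.mapMatrix M k) i i
  simp only [superTrace_apply, map_sum, map_smul, map_pow_entry]

lemma superTrace_one (p : ι → ℕ) :
    superTrace 𝕜 p (1 : Matrix ι ι A) = (∑ i, (-1 : 𝕜) ^ p i) • (1 : A) := by
  simp [superTrace_apply, sum_smul]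

lemma superTrace_scalar_mul (p : ι → ℕ) (r : A) (M : Matrix ι ι A) :
    superTrace 𝕜 p (scalar ι r * M) = r * superTrace 𝕜 p M := by
  simp [superTrace_apply, mul_sum]

lemma superTrace_scalar_add_pow (p : ι → ℕ) {r : A} (hr : ∀ a, Commute r a)
    (M : Matrix ι ι A) (k : ℕ) :
    superTrace 𝕜 p ((scalar ι r + M) ^ k) =
      ∑ g ∈ range (k + 1), (k.choose g : 𝕜) • (r ^ g * superTrace 𝕜 p (M ^ (k - g))) := by
  rw [(scalar_commute r hr M).add_pow, map_sum]
  refine sum_congr rfl fun g _ => ?_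
  rw [← nsmul_eq_mul', map_nsmul, ← map_pow, superTrace_scalar_mul, Nat.cast_smul_eq_nsmul]

end SuperTrace

section KoszulSign

variable {ι A 𝕜 : Type*} [CommRing 𝕜] [Ring A] [Algebra 𝕜 A]

/-- The Koszul sign rule `u_ij y = (-1)^{(|i|+|j|)s} y u_ij` between the entries of a matrix `u`,
of parity `|i| + |j|`, and an element `y` of parity `s`. -/
def KoszulCommutes (𝕜 : Type*) [CommRing 𝕜] [Algebra 𝕜 A] (p : ι → ℕ) (u : Matrix ι ι A)
    (s : ℕ) (y : A) : Prop :=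
  ∀ i j, u i j * y = ((-1 : 𝕜) ^ ((p i + p j) * s)) • (y * u i j)

namespace KoszulCommutes

variable {p : ι → ℕ} {u : Matrix ι ι A} {s t : ℕ} {y z : A}

lemma commute (h : KoszulCommutes 𝕜 p u s y) (hs : Even s) (i j : ι) : Commute y (u i j) := by
  rw [commute_iff_eq, h i j, (hs.mul_left _).neg_one_pow, one_smul]

lemma mul (hy : KoszulCommutes 𝕜 p u s y) (hz : KoszulCommutes 𝕜 p u t z) :
    KoszulCommutes 𝕜 p u (s + t) (y * z) := fun i j => by
  rw [← mul_assoc, hy, smul_mul_assoc, mul_assoc, hz, mul_smul_comm, smul_smul, ← pow_add,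
    ← mul_add, mul_assoc]

lemma pow [Fintype ι] [DecidableEq ι] (h : KoszulCommutes 𝕜 p u s y) (k : ℕ) :
    KoszulCommutes 𝕜 p (u ^ k) s y := by
  induction k with
  | zero =>
    intro i j
    rcases eq_or_ne i j with rfl | hij
    · simp [← two_mul, mul_assoc]
    · simp [hij]
  | succ k ih =>
    intro i j
    rw [pow_succ, Matrix.mul_apply, sum_mul, mul_sum, smul_sum]
    refine sum_congr rfl fun c _ => ?_
    rw [mul_assoc, h, mul_smul_comm, ← mul_assoc, ih, smul_mul_assoc, smul_smul, ← pow_add,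
      mul_assoc]
    congr 1
    exact neg_one_pow_congr (by grind)

end KoszulCommutes

end KoszulSign

section SuperWeyl

variable {ι A B 𝕜 : Type*} [CommRing 𝕜] [Ring A] [Algebra 𝕜 A] [Ring B] [Algebra 𝕜 B]
  [DecidableEq ι]

/-- The relations of homogeneous differential operators: `x a`, `D a` and `d` stand for
`t_a/t_0`, `t_0∂_a` and `t_0∂_0`, where `x a` and `D a` have parity `p a`. -/
structure SuperWeylRelations (𝕜 : Type*) [CommRing 𝕜] [Algebra 𝕜 A] (p : ι → ℕ) (x D : ι → A)
    (d : A) : Prop where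
  coord_mul_coord (a b : ι) : x a * x b = ((-1 : 𝕜) ^ (p a * p b)) • (x b * x a)
  deriv_mul_coord (a b : ι) :
    D a * x b = (if a = b then 1 else 0) + ((-1 : 𝕜) ^ (p a * p b)) • (x b * D a)
  base_mul_coord (b : ι) : d * x b = x b * d - x b

/-- The Euler operator `t_0∂_0 + Σ_a t_a∂_a`, in the notation of `SuperWeylRelations`. -/
def eulerOperator [Fintype ι] (x D : ι → A) (d : A) : A := d + ∑ a, x a * D a

namespace SuperWeylRelations

variable {p : ι → ℕ} {x D : ι → A} {d : A}

lemma map (h : SuperWeylRelations 𝕜 p x D d) (f : A →ₐ[𝕜] B) :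
    SuperWeylRelations 𝕜 p (f ∘ x) (f ∘ D) (f d) where
  coord_mul_coord a b := by simpa using congrArg f (h.coord_mul_coord a b)
  deriv_mul_coord a b := by simpa [apply_ite f] using congrArg f (h.deriv_mul_coord a b)
  base_mul_coord b := by simpa using congrArg f (h.base_mul_coord b)

lemma of_injective {f : A →ₐ[𝕜] B} (hf : Function.Injective f)
    (h : SuperWeylRelations 𝕜 p (f ∘ x) (f ∘ D) (f d)) : SuperWeylRelations 𝕜 p x D d where
  coord_mul_coord a b := hf (by simpa using h.coord_mul_coord a b)
  deriv_mul_coord a b := hf (by simpa [apply_ite f] using h.deriv_mul_coord a b)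
  base_mul_coord b := hf (by simpa using h.base_mul_coord b)

variable [Fintype ι]

lemma commute_eulerOperator (h : SuperWeylRelations 𝕜 p x D d) (b : ι) :
    Commute (eulerOperator x D d) (x b) := by
  have summand (a : ι) : x a * D a * x b = (if a = b then x b else 0) + x b * (x a * D a) := by
    rw [mul_assoc, h.deriv_mul_coord, mul_add, mul_smul_comm, ← mul_assoc, h.coord_mul_coord a b,
      smul_mul_assoc, smul_smul, neg_one_pow_mul_self, one_smul, mul_assoc, mul_ite, mul_one,
      mul_zero]
    congr 1
    split_ifs with hab
    exacts [congrArg x hab, rfl]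
  rw [commute_iff_eq, eulerOperator, add_mul, mul_add, h.base_mul_coord, sum_mul, mul_sum]
  simp only [summand, sum_add_distrib, sum_ite_eq', mem_univ, if_true]
  abel

end SuperWeylRelations

end SuperWeyl

section HomogeneousMatrix

variable {ι A 𝕜 : Type*} [Fintype ι] [CommRing 𝕜] [Ring A] [Algebra 𝕜 A]

/-- The parity on `{0} ∪ ι`, encoded as `Option ι` with `none` for the even index `0`. -/
def homParity (p : ι → ℕ) : Option ι → ℕ := fun i => i.elim 0 p

/-- The column `(t_i/t_0)_i` over `i ∈ {0} ∪ ι`, in the notation of `SuperWeylRelations`. -/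
def coordCol (x : ι → A) : Option ι → A := fun i => i.elim 1 x

/-- The signed row `((-1)^{|i|} t_0∂_i)_i` over `i ∈ {0} ∪ ι`, in the notation of
`SuperWeylRelations`. -/
def derivRow (𝕜 : Type*) [CommRing 𝕜] [Algebra 𝕜 A] (p : ι → ℕ) (D : ι → A) (d : A) :
    Option ι → A :=
  fun i => i.elim d fun a => ((-1 : 𝕜) ^ p a) • D a

lemma superTrace_coordCol_derivRow (p : ι → ℕ) (x D : ι → A) (d : A) :
    superTrace 𝕜 (homParity p) (vecMulVec (coordCol x) (derivRow 𝕜 p D d)) =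
      eulerOperator x D d := by
  simp [superTrace_apply, vecMulVec_apply, coordCol, derivRow, homParity, eulerOperator,
    smul_smul, neg_one_pow_mul_self]

variable [DecidableEq ι]

/-- The inclusion of `A^ι` into `A^{0 ∪ ι}` as the vectors with vanishing `0`-th coordinate. -/
def affineIncl (ι A : Type*) [DecidableEq ι] [Ring A] : Matrix (Option ι) ι A :=
  of fun i a => if i = some a then 1 else 0

/-- The projection of `A^{0 ∪ ι}` onto `A^ι` along `coordCol x`. -/
def affineProj (x : ι → A) : Matrix ι (Option ι) A :=
  of fun a i => i.elim (-x a) ((1 : Matrix ι ι A) a)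

/-- The lift of an endomorphism `u` of `A^ι`, the quotient of `A^{0 ∪ ι}` by `coordCol x`, to
the endomorphism of `A^{0 ∪ ι}` that kills `coordCol x`. -/
def affineLift (x : ι → A) (u : Matrix ι ι A) : Matrix (Option ι) (Option ι) A :=
  affineIncl ι A * u * affineProj x

/-- The matrix `(t_i∂_j) + u`, with `u` lifted along the projection that kills `(t_i/t_0)_i`.
It is the image under `φ_0` of the signed matrix of generators of `gl(m+1|n)`. -/
def homMatrix (𝕜 : Type*) [CommRing 𝕜] [Algebra 𝕜 A] (p : ι → ℕ) (x D : ι → A) (d : A)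
    (u : Matrix ι ι A) : Matrix (Option ι) (Option ι) A :=
  vecMulVec (coordCol x) (derivRow 𝕜 p D d) + affineLift x u

variable {x D : ι → A} {d : A} {p : ι → ℕ} {u v : Matrix ι ι A}

lemma affineProj_mul_affineIncl (x : ι → A) : affineProj x * affineIncl ι A = 1 := by
  ext a b
  simp [affineProj, affineIncl, Matrix.mul_apply]

lemma affineProj_mulVec_coordCol (x : ι → A) : affineProj x *ᵥ coordCol x = 0 := by
  ext a
  simp [affineProj, coordCol, mulVec, dotProduct, one_apply]

lemma affineLift_apply (x : ι → A) (u : Matrix ι ι A) (i j : Option ι) :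
    affineLift x u i j = i.elim 0 fun a => j.elim (-∑ b, u a b * x b) (u a) := by
  cases i <;> cases j <;>
    simp [affineLift, affineIncl, affineProj, Matrix.mul_apply, one_apply]

lemma affineLift_pow_succ (x : ι → A) (u : Matrix ι ι A) (k : ℕ) :
    affineLift x u ^ (k + 1) = affineLift x (u ^ (k + 1)) :=
  mul_mul_pow_succ (affineProj_mul_affineIncl x) u k

lemma affineLift_mul_vecMulVec (x : ι → A) (u : Matrix ι ι A) (q : Option ι → A) :
    affineLift x u * vecMulVec (coordCol x) q = 0 := by
  rw [mul_vecMulVec, affineLift, ← mulVec_mulVec, affineProj_mulVec_coordCol, mulVec_zero,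
    zero_vecMulVec]

lemma superTrace_affineLift (p : ι → ℕ) (x : ι → A) (u : Matrix ι ι A) :
    superTrace 𝕜 (homParity p) (affineLift x u) = superTrace 𝕜 p u := by
  simp [superTrace_apply, affineLift_apply, homParity]

lemma eulerOperator_commute_pow (hx : ∀ a, KoszulCommutes 𝕜 p u (p a) (x a))
    (hD : ∀ a, KoszulCommutes 𝕜 p u (p a) (D a)) (hd : KoszulCommutes 𝕜 p u 0 d) (k : ℕ)
    (i j : ι) : Commute (eulerOperator x D d) ((u ^ k) i j) :=
  ((hd.pow k).commute Even.zero i j).add_left <| Commute.sum_left _ _ _ fun a _ =>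
    (((hx a).mul (hD a)).pow k).commute ⟨p a, rfl⟩ i j

namespace SuperWeylRelations

lemma derivRow_dotProduct_coordCol (h : SuperWeylRelations 𝕜 p x D d) :
    derivRow 𝕜 p D d ⬝ᵥ coordCol x = eulerOperator x D d + (∑ a, (-1 : 𝕜) ^ p a) • (1 : A) := by
  have summand (a : ι) :
      ((-1 : 𝕜) ^ p a) • (D a * x a) = x a * D a + ((-1 : 𝕜) ^ p a) • (1 : A) := by
    rw [h.deriv_mul_coord, if_pos rfl, smul_add, smul_smul, ← pow_add,
      (show Even (p a + p a * p a) by grind).neg_one_pow, one_smul, add_comm]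
  simp [dotProduct, derivRow, coordCol, eulerOperator, summand, sum_add_distrib, sum_smul,
    add_assoc]

/-- Only `[D b, x b] = 1` contributes, because the `x b` supercommute with `v`. -/
lemma vecMul_mul_coord (h : SuperWeylRelations 𝕜 p x D d)
    (hv : ∀ a, KoszulCommutes 𝕜 p v (p a) (x a)) (b : ι) :
    ((fun a => ((-1 : 𝕜) ^ p a) • D a) ᵥ* v) b * x b =
      ((-1 : 𝕜) ^ p b) • (x b * ((fun a => ((-1 : 𝕜) ^ p a) • D a) ᵥ* v) b + v b b) := by
  have summand (a : ι) : ((-1 : 𝕜) ^ p a) • D a * v a b * x b =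
      ((-1 : 𝕜) ^ p b) • (x b * (((-1 : 𝕜) ^ p a) • D a * v a b) + if a = b then v b b else 0) := by
    have move_coord : ((-1 : 𝕜) ^ p a) • D a * v a b * x b =
        ((-1 : 𝕜) ^ (p a + (p a + p b) * p b)) • (D a * x b * v a b) := by
      rw [mul_assoc, hv, mul_smul_comm, smul_mul_assoc, smul_smul, ← pow_add, mul_assoc, add_comm]
    rw [move_coord, h.deriv_mul_coord, add_mul (ite _ _ _), smul_add, smul_add, add_comm]
    congr 1
    · simp only [smul_mul_assoc, mul_smul_comm, smul_smul, ← pow_add, mul_assoc]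
      congr 1
      exact neg_one_pow_congr (by grind)
    · split_ifs with hab
      · subst hab
        rw [one_mul]
        congr 1
        exact neg_one_pow_congr (by grind)
      · simp
  simp only [vecMul, dotProduct, sum_mul, mul_sum, summand, ← smul_sum, sum_add_distrib]
  simp

lemma superTrace_vecMulVec_mul_affineLift (h : SuperWeylRelations 𝕜 p x D d)
    (hv : ∀ a, KoszulCommutes 𝕜 p v (p a) (x a)) :
    superTrace 𝕜 (homParity p)
      (vecMulVec (coordCol x) (derivRow 𝕜 p D d) * affineLift x v) = -superTrace 𝕜 p v := by
  set w := (fun a => ((-1 : 𝕜) ^ p a) • D a) ᵥ* v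
  have w_mul_coord (b : ι) : w b * x b = ((-1 : 𝕜) ^ p b) • (x b * w b + v b b) :=
    h.vecMul_mul_coord hv b
  have row_apply (j : Option ι) : (derivRow 𝕜 p D d ᵥ* affineLift x v) j =
      j.elim (-∑ b, w b * x b) w := by
    cases j with
    | none =>
      simp only [vecMul, dotProduct, affineLift_apply, derivRow, w, Fintype.sum_option,
        Option.elim_none, Option.elim_some, mul_zero, zero_add, mul_neg, sum_neg_distrib, mul_sum,
        sum_mul, mul_assoc]
      rw [sum_comm]
    | some b => simp [vecMul, dotProduct, affineLift_apply, derivRow, w]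
  simp [superTrace_apply, vecMulVec_mul, vecMulVec_apply, row_apply, coordCol, homParity,
    w_mul_coord, sum_add_distrib]

end SuperWeylRelations

end HomogeneousMatrix

section HomMatrixPowers

variable {ι A 𝕜 : Type*} [Fintype ι] [DecidableEq ι] [CommRing 𝕜] [Ring A] [Algebra 𝕜 A]
  {x D : ι → A} {d : A} {p : ι → ℕ} {u : Matrix ι ι A}

/-- Since `affineLift x u` kills `coordCol x`, a word in the two summands of `homMatrix` vanishes
unless all rank-one factors precede all factors `affineLift x u`. -/
lemma homMatrix_pow (p : ι → ℕ) (x D : ι → A) (d : A) (u : Matrix ι ι A) (k : ℕ) :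
    homMatrix 𝕜 p x D d u ^ k = ∑ i ∈ range (k + 1),
      vecMulVec (coordCol x) (derivRow 𝕜 p D d) ^ (k - i) * affineLift x u ^ i :=
  add_pow_eq_sum_of_mul_eq_zero (affineLift_mul_vecMulVec x u _) k

namespace SuperWeylRelations

lemma commute_derivRow_dotProduct_coordCol (h : SuperWeylRelations 𝕜 p x D d) (i : Option ι) :
    Commute (derivRow 𝕜 p D d ⬝ᵥ coordCol x) (coordCol x i) := by
  cases i with
  | none => exact Commute.one_right _
  | some b =>
    rw [h.derivRow_dotProduct_coordCol]
    exact (h.commute_eulerOperator b).add_left ((Commute.one_left _).smul_left _)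

lemma superTrace_vecMulVec_pow_mul_affineLift_pow (h : SuperWeylRelations 𝕜 p x D d)
    (hx : ∀ a, KoszulCommutes 𝕜 p u (p a) (x a)) (k l : ℕ) :
    superTrace 𝕜 (homParity p)
      (vecMulVec (coordCol x) (derivRow 𝕜 p D d) ^ (k + 1) * affineLift x u ^ (l + 1)) =
      -((derivRow 𝕜 p D d ⬝ᵥ coordCol x) ^ k * superTrace 𝕜 p (u ^ (l + 1))) := by
  rw [vecMulVec_pow_succ h.commute_derivRow_dotProduct_coordCol, affineLift_pow_succ, mul_assoc,
    superTrace_scalar_mul,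
    h.superTrace_vecMulVec_mul_affineLift fun a => (hx a).pow (l + 1), mul_neg]

lemma superTrace_homMatrix_pow_succ (h : SuperWeylRelations 𝕜 p x D d)
    (hx : ∀ a, KoszulCommutes 𝕜 p u (p a) (x a)) (k : ℕ) :
    superTrace 𝕜 (homParity p) (homMatrix 𝕜 p x D d u ^ (k + 1)) =
      (derivRow 𝕜 p D d ⬝ᵥ coordCol x) ^ k * eulerOperator x D d + superTrace 𝕜 p (u ^ (k + 1)) -
        ∑ i ∈ range k,
          (derivRow 𝕜 p D d ⬝ᵥ coordCol x) ^ (k - 1 - i) * superTrace 𝕜 p (u ^ (i + 1)) := by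
  have mixed_words : ∀ i ∈ range k, superTrace 𝕜 (homParity p)
      (vecMulVec (coordCol x) (derivRow 𝕜 p D d) ^ (k + 1 - (i + 1)) * affineLift x u ^ (i + 1)) =
      -((derivRow 𝕜 p D d ⬝ᵥ coordCol x) ^ (k - 1 - i) * superTrace 𝕜 p (u ^ (i + 1))) := by
    intro i hi
    rw [show k + 1 - (i + 1) = k - 1 - i + 1 by grind,
      h.superTrace_vecMulVec_pow_mul_affineLift_pow hx]
  rw [homMatrix_pow, map_sum, sum_range_succ, sum_range_succ', sum_congr rfl mixed_words,
    pow_zero, mul_one, Nat.sub_zero, vecMulVec_pow_succ h.commute_derivRow_dotProduct_coordCol,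
    superTrace_scalar_mul, superTrace_coordCol_derivRow, Nat.sub_self, pow_zero, one_mul,
    affineLift_pow_succ, superTrace_affineLift, sum_neg_distrib]
  abel

end SuperWeylRelations

/-- The truncated binomial expansion `A_k(s) = Σ_{g=0}^{k-s} C(k,g) R^g r^{k-s-g}`. -/
def truncatedBinomial (𝕜 : Type*) [CommRing 𝕜] [Algebra 𝕜 A] (R r : A) (k s : ℕ) : A :=
  ∑ g ∈ range (k - s + 1), (k.choose g : 𝕜) • (R ^ g * r ^ (k - s - g))

lemma sum_choose_smul_pow_mul_sum {R : A} (hR : ∀ a, Commute R a) (r : A) (G : ℕ → A) (k : ℕ) :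
    ∑ g ∈ range k, (k.choose g : 𝕜) • (R ^ g * ∑ s ∈ Icc 2 (k - g), G (s - 1) * r ^ (k - g - s)) =
      ∑ s ∈ Icc 2 k, G (s - 1) * truncatedBinomial 𝕜 R r k s := by
  simp only [truncatedBinomial, mul_sum, smul_sum]
  rw [sum_comm' (t' := Icc 2 k) (s' := fun s => range (k - s + 1)) (by grind)]
  refine sum_congr rfl fun s _ => sum_congr rfl fun g _ => ?_
  rw [mul_smul_comm, ← mul_assoc, ← mul_assoc, ((hR (G (s - 1))).pow_left g).eq,
    Nat.sub_right_comm]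

namespace SuperWeylRelations

lemma superTrace_homMatrix_pow (h : SuperWeylRelations 𝕜 p x D d)
    (hx : ∀ a, KoszulCommutes 𝕜 p u (p a) (x a)) (hD : ∀ a, KoszulCommutes 𝕜 p u (p a) (D a))
    (hd : KoszulCommutes 𝕜 p u 0 d) {k : ℕ} (hk : 0 < k) :
    superTrace 𝕜 (homParity p) (homMatrix 𝕜 p x D d u ^ k) =
      (derivRow 𝕜 p D d ⬝ᵥ coordCol x) ^ (k - 1) * eulerOperator x D d + superTrace 𝕜 p (u ^ k) -
        ∑ s ∈ Icc 2 k,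
          superTrace 𝕜 p (u ^ (s - 1)) * (derivRow 𝕜 p D d ⬝ᵥ coordCol x) ^ (k - s) := by
  obtain ⟨k, rfl⟩ := Nat.exists_eq_add_of_lt hk
  have commute_superTrace (l : ℕ) :
      Commute (derivRow 𝕜 p D d ⬝ᵥ coordCol x) (superTrace 𝕜 p (u ^ l)) := by
    rw [superTrace_apply, h.derivRow_dotProduct_coordCol]
    exact Commute.sum_right _ _ _ fun i _ =>
      ((eulerOperator_commute_pow hx hD hd l i i).add_left
        ((Commute.one_left _).smul_left _)).smul_right _
  rw [zero_add, h.superTrace_homMatrix_pow_succ hx, Nat.add_sub_cancel]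
  congr 1
  refine sum_nbij' (· + 2) (· - 2) (by grind) (by grind) (by grind) (by grind) fun i hi => ?_
  have := mem_range.1 hi
  rw [((commute_superTrace (i + 1)).pow_left _).eq]
  congr 2
  lia

theorem superTrace_scalar_add_homMatrix_pow (h : SuperWeylRelations 𝕜 p x D d)
    (hx : ∀ a, KoszulCommutes 𝕜 p u (p a) (x a)) (hD : ∀ a, KoszulCommutes 𝕜 p u (p a) (D a))
    (hd : KoszulCommutes 𝕜 p u 0 d) {R : A} (hR : ∀ a, Commute R a) {k : ℕ} (hk : 0 < k) :
    superTrace 𝕜 (homParity p) ((scalar _ R + homMatrix 𝕜 p x D d u) ^ k) =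
      truncatedBinomial 𝕜 R (derivRow 𝕜 p D d ⬝ᵥ coordCol x) k 1 * eulerOperator x D d
      + (∑ i, (-1 : 𝕜) ^ homParity p i) • R ^ k
      + ∑ g ∈ range k, (k.choose g : 𝕜) • (R ^ g * superTrace 𝕜 p (u ^ (k - g)))
      - ∑ s ∈ Icc 2 k, superTrace 𝕜 p (u ^ (s - 1)) *
          truncatedBinomial 𝕜 R (derivRow 𝕜 p D d ⬝ᵥ coordCol x) k s := by
  have homMatrix_terms (g : ℕ) (hg : g ∈ range k) :=
    h.superTrace_homMatrix_pow hx hD hd (Nat.sub_pos_of_lt (mem_range.1 hg))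
  rw [superTrace_scalar_add_pow 𝕜 _ hR, sum_range_succ,
    sum_congr rfl fun g hg => by rw [homMatrix_terms g hg, mul_sub, mul_add, smul_sub, smul_add],
    sum_sub_distrib, sum_add_distrib,
    sum_choose_smul_pow_mul_sum hR _ fun i => superTrace 𝕜 p (u ^ i), Nat.choose_self, Nat.cast_one,
    one_smul, Nat.sub_self, pow_zero, superTrace_one, mul_smul_comm, mul_one]
  have leading : ∑ g ∈ range k, (k.choose g : 𝕜) •
      (R ^ g * ((derivRow 𝕜 p D d ⬝ᵥ coordCol x) ^ (k - g - 1) * eulerOperator x D d)) =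
      truncatedBinomial 𝕜 R (derivRow 𝕜 p D d ⬝ᵥ coordCol x) k 1 * eulerOperator x D d := by
    rw [truncatedBinomial, sum_mul, Nat.sub_add_cancel hk]
    refine sum_congr rfl fun g _ => ?_
    rw [smul_mul_assoc, mul_assoc, Nat.sub_right_comm]
  rw [leading]
  abel

end SuperWeylRelations

end HomMatrixPowers

section GelfandInvariants

variable {ι A B : Type} [Fintype ι] [DecidableEq ι] [Ring A] [Algebra ℂ A] [Ring B] [Algebra ℂ B]

/-- The matrix `((-1)^{|b|} e_ab)`, whose powers absorb the signs of the Gelfand invariants. -/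
def signedMatrix (p : ι → ℕ) (e : ι → ι → A) : Matrix ι ι A :=
  of fun a b => ((-1 : ℂ) ^ p b) • e a b

lemma rElt_succ (e : ι → ι → A) (p : ι → ℕ) (k : ℕ) (a b : ι) :
    rElt e p (k + 2) a b = ∑ c, ((-1 : ℂ) ^ p c) • (e a c * rElt e p (k + 1) c b) := by
  simp only [rElt]
  rw [← (Fin.consEquiv fun _ : Fin (k + 1) => ι).sum_comp, Fintype.sum_prod_type]
  refine sum_congr rfl fun c _ => ?_
  rw [mul_sum, smul_sum]
  refine sum_congr rfl fun v _ => ?_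
  have cons_apply : (Fin.consEquiv fun _ : Fin (k + 1) => ι) (c, v) = Fin.cons c v := rfl
  have snoc_cons : (Fin.snoc (Fin.cons c v : Fin (k + 1) → ι) b : Fin (k + 2) → ι) =
      Fin.cons c (Fin.snoc v b : Fin (k + 1) → ι) :=
    (Fin.cons_snoc_eq_snoc_cons (β := ι) c v b).symm
  rw [mul_smul_comm, smul_smul, ← pow_add]
  congr 1
  · simp [Fin.sum_univ_succ]
  · simp only [List.ofFn_succ (n := k + 1), List.prod_cons, chainF, cons_apply, snoc_cons,
      Fin.castSucc_succ, Fin.cons_succ, Fin.castSucc_zero, Fin.cons_zero]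

lemma rElt_eq_signedMatrix_pow (e : ι → ι → A) (p : ι → ℕ) (k : ℕ) (a b : ι) :
    rElt e p k a b = ((-1 : ℂ) ^ p b) • (signedMatrix p e ^ k) a b := by
  induction k using Nat.twoStepInduction generalizing a with
  | zero =>
    rcases eq_or_ne a b with rfl | hab
    · simpa [rElt] using congrArg (· • (1 : A)) (neg_one_pow_congr (by grind))
    · simp [rElt, hab]
  | one => simp [rElt, signedMatrix, smul_smul, neg_one_pow_mul_self, chainF, Fin.snoc]
  | more k _ ih =>
    rw [rElt_succ, pow_succ', Matrix.mul_apply, smul_sum]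
    refine sum_congr rfl fun c _ => ?_
    rw [ih c, signedMatrix, of_apply, mul_smul_comm, smul_mul_assoc, smul_smul, smul_smul, mul_comm]

lemma gelf_eq_superTrace (e : ι → ι → A) (p : ι → ℕ) (k : ℕ) :
    gelf e p k = superTrace ℂ p (signedMatrix p e ^ k) := by
  simp only [gelf, rElt_eq_signedMatrix_pow, superTrace_apply]

lemma map_gelf (f : A →ₐ[ℂ] B) (e : ι → ι → A) (p : ι → ℕ) (k : ℕ) :
    f (gelf e p k) = superTrace ℂ p (signedMatrix p (fun a b => f (e a b)) ^ k) := by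
  rw [gelf_eq_superTrace, map_superTrace_pow]
  congr 2
  ext a b
  simp [signedMatrix]

end GelfandInvariants

section DifferentialOperators

variable {m n : ℕ}

lemma mkOp_fmono {M : Type} [AddCommGroup M] [Module ℂ M] (g : FMon m n → M) (t : FMon m n) :
    mkOp g (fmono t) = g t := by
  simp [mkOp, fmono]

lemma end_ext {f g : Module.End ℂ (FSp m n)} (h : ∀ t, f (fmono t) = g (fmono t)) : f = g :=
  Finsupp.lhom_ext' fun t => LinearMap.ext_ring (h t)

lemma neg_one_pow_cntB_update {b : Fin n → Bool} {i : Fin n} {v : Bool} (h : b i ≠ v) (j : Fin n) :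
    (-1 : ℂ) ^ cntB (Function.update b i v) j =
      (if i < j then -1 else 1) * (-1 : ℂ) ^ cntB b j := by
  have eq_prod (c : Fin n → Bool) :
      (-1 : ℂ) ^ cntB c j = ∏ l, if l < j ∧ c l = true then (-1 : ℂ) else 1 := by
    rw [cntB, ← prod_const, prod_filter]
  rw [eq_prod, eq_prod, ← mul_prod_erase _ _ (mem_univ i),
    ← mul_prod_erase univ (fun l => if l < j ∧ b l = true then (-1 : ℂ) else 1) (mem_univ i),
    ← mul_assoc]
  congr 1
  · cases hb : b i <;> cases v <;> simp_all
  · exact prod_congr rfl fun l hl => by rw [Function.update_of_ne (ne_of_mem_erase hl)]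

lemma cntB_update_self (b : Fin n → Bool) (i : Fin n) (v : Bool) :
    cntB (Function.update b i v) i = cntB b i := by
  unfold cntB
  congr 1
  refine filter_congr fun l _ => and_congr_right fun hl => ?_
  rw [Function.update_of_ne hl.ne]

lemma opDivE_mul_opDivE (a b : Fin m) :
    (opDivE a : Module.End ℂ (FSp m n)) * opDivE b = opDivE b * opDivE a := by
  refine end_ext fun ⟨k, e, o⟩ => ?_
  rcases eq_or_ne a b with rfl | hab
  · rfl
  · simp [opDivE, mkOp_fmono, hab, hab.symm, Function.update_comm hab]

lemma opDivE_mul_opDivO (a : Fin m) (b : Fin n) :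
    (opDivE a : Module.End ℂ (FSp m n)) * opDivO b = opDivO b * opDivE a := by
  refine end_ext fun ⟨k, e, o⟩ => ?_
  simp only [Module.End.mul_apply, opDivE, opDivO, mkOp_fmono]
  split_ifs <;> simp [mkOp_fmono]

lemma opDivO_mul_opDivO (a b : Fin n) :
    (opDivO a : Module.End ℂ (FSp m n)) * opDivO b = (-1 : ℂ) • (opDivO b * opDivO a) := by
  refine end_ext fun ⟨k, e, o⟩ => ?_
  rcases eq_or_ne a b with rfl | hab
  · cases ha : o a <;> simp [opDivO, mkOp_fmono, ha]
  · rcases lt_or_gt_of_ne hab with h | h <;> cases ha : o a <;> cases hb : o b <;>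
      simp [opDivO, mkOp_fmono, hab, hab.symm, smul_smul, ha, hb, neg_one_pow_cntB_update,
        Function.update_comm hab, h, h.asymm, mul_comm]

lemma opPar0_mul_opDivE (b : Fin m) :
    (opPar0 : Module.End ℂ (FSp m n)) * opDivE b = opDivE b * opPar0 - opDivE b := by
  refine end_ext fun ⟨k, e, o⟩ => ?_
  simp [opPar0, opDivE, mkOp_fmono, sub_smul]

lemma opPar0_mul_opDivO (b : Fin n) :
    (opPar0 : Module.End ℂ (FSp m n)) * opDivO b = opDivO b * opPar0 - opDivO b := by
  refine end_ext fun ⟨k, e, o⟩ => ?_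
  cases hb : o b <;> simp [opPar0, opDivO, mkOp_fmono, sub_smul, hb, smul_sub, smul_comm (k : ℂ)]

lemma opParE_mul_opDivE (a b : Fin m) :
    (opParE a : Module.End ℂ (FSp m n)) * opDivE b =
      (if a = b then 1 else 0) + opDivE b * opParE a := by
  refine end_ext fun ⟨k, e, o⟩ => ?_
  rcases eq_or_ne a b with rfl | hab
  · rcases Nat.eq_zero_or_pos (e a) with he | he
    · have update_zero : Function.update e a 0 = e := he ▸ Function.update_eq_self a e
      simp [opDivE, opParE, mkOp_fmono, he, update_zero]
    · simp [opDivE, opParE, mkOp_fmono, Nat.sub_add_cancel he, add_smul, add_comm (fmono _)]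
  · simp [opDivE, opParE, mkOp_fmono, hab, hab.symm, Function.update_comm hab]

lemma opParE_mul_opDivO (a : Fin m) (b : Fin n) :
    (opParE a : Module.End ℂ (FSp m n)) * opDivO b = opDivO b * opParE a := by
  refine end_ext fun ⟨k, e, o⟩ => ?_
  simp only [Module.End.mul_apply, opDivO, opParE, mkOp_fmono, map_smul]
  split_ifs <;> simp [mkOp_fmono, smul_smul, mul_comm]

lemma opParO_mul_opDivE (a : Fin n) (b : Fin m) :
    (opParO a : Module.End ℂ (FSp m n)) * opDivE b = opDivE b * opParO a := by
  refine end_ext fun ⟨k, e, o⟩ => ?_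
  simp only [Module.End.mul_apply, opParO, opDivE, mkOp_fmono]
  split_ifs <;> simp [mkOp_fmono]

lemma opParO_mul_opDivO (a b : Fin n) :
    (opParO a : Module.End ℂ (FSp m n)) * opDivO b =
      (if a = b then 1 else 0) + (-1 : ℂ) • (opDivO b * opParO a) := by
  refine end_ext fun ⟨k, e, o⟩ => ?_
  rcases eq_or_ne a b with rfl | hab
  · have update_eq_self {v : Bool} (hv : o a = v) : Function.update o a v = o :=
      hv ▸ Function.update_eq_self a o
    cases ha : o a <;>
      simp [opDivO, opParO, mkOp_fmono, cntB_update_self, smul_smul, neg_one_pow_mul_self, ha,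
        update_eq_self ha]
  · rcases lt_or_gt_of_ne hab with h | h <;> cases ha : o a <;> cases hb : o b <;>
      simp [opDivO, opParO, mkOp_fmono, hab, hab.symm, smul_smul, ha, hb, neg_one_pow_cntB_update,
        Function.update_comm hab, h, h.asymm, mul_comm]

lemma superWeylRelations_op :
    SuperWeylRelations ℂ pI (opDiv : Ind m n → Module.End ℂ (FSp m n)) (opPar ∘ emb)
      (opPar z0) where
  coord_mul_coord := by
    rintro (a | a) (b | b)
    · simpa [opDiv, pI] using opDivE_mul_opDivE a b
    · simpa [opDiv, pI] using opDivE_mul_opDivO a b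
    · simpa [opDiv, pI] using (opDivE_mul_opDivO b a).symm
    · simpa [opDiv, pI] using opDivO_mul_opDivO a b
  deriv_mul_coord := by
    rintro (a | a) (b | b)
    · simpa [opDiv, opPar, emb, pI] using opParE_mul_opDivE a b
    · simpa [opDiv, opPar, emb, pI] using opParE_mul_opDivO a b
    · simpa [opDiv, opPar, emb, pI] using opParO_mul_opDivE a b
    · simpa [opDiv, opPar, emb, pI] using opParO_mul_opDivO a b
  base_mul_coord := by
    rintro (b | b)
    · exact opPar0_mul_opDivE b
    · exact opPar0_mul_opDivO b

lemma superWeylRelations_tdiv_tpar :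
    SuperWeylRelations ℂ pI (tdiv : Ind m n → Dprime m n) (tpar ∘ emb) (tpar z0) := by
  have op_relations : SuperWeylRelations ℂ pI ((Dprime m n).val ∘ tdiv)
      ((Dprime m n).val ∘ (tpar ∘ emb)) ((Dprime m n).val (tpar z0)) := superWeylRelations_op
  exact op_relations.of_injective Subtype.val_injective

end DifferentialOperators

section IndexSet

variable {m n : ℕ}

lemma pI_emb (a : Ind m n) : pI (emb a) = pI a := by
  cases a <;> rfl

lemma pI_z0 : pI (z0 : Ind (m + 1) n) = 0 := rfl

lemma tdivB_emb (a : Ind m n) : tdivB (emb a) = tdiv a := by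
  cases a <;> rfl

lemma tdivB_z0 : tdivB (z0 : Ind (m + 1) n) = 1 := rfl

lemma sum_neg_one_pow_pI (m n : ℕ) : ∑ a : Ind m n, (-1 : ℂ) ^ pI a = m - n := by
  simp [pI, sub_eq_add_neg]

/-- The identification of `{0} ∪ I` with `Î`. -/
def optionIndEquiv (m n : ℕ) : Option (Ind m n) ≃ Ind (m + 1) n where
  toFun i := i.elim z0 emb
  invFun := Sum.elim (Fin.cases none (some ∘ Sum.inl)) (some ∘ Sum.inr)
  left_inv := by rintro (_ | _ | _) <;> rfl
  right_inv := by
    rintro (i | i)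
    · cases i using Fin.cases <;> rfl
    · rfl

lemma pI_comp_optionIndEquiv : pI ∘ optionIndEquiv m n = homParity pI := by
  ext (_ | a)
  exacts [rfl, pI_emb a]

lemma sum_neg_one_pow_homParity (m n : ℕ) :
    ∑ i : Option (Ind m n), (-1 : ℂ) ^ homParity pI i = m + 1 - n := by
  rw [Fintype.sum_option]
  simp only [homParity, Option.elim_none, Option.elim_some, sum_neg_one_pow_pI]
  ring

lemma En_eq_eulerOperator (m n : ℕ) :
    En m n = eulerOperator tdiv (tpar ∘ emb) (tpar z0) := by
  rw [En, ← (optionIndEquiv m n).sum_comp, Fintype.sum_option, eulerOperator]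
  simp [optionIndEquiv, tdel, tdivB_z0, tdivB_emb]

end IndexSet

namespace SuperTensor

variable {m n : ℕ} (ST : SuperTensor m n)

/-- The signed matrix `1 ⊗ ((-1)^{|b|} e_ab)` of generators of `gl(m|n)`. -/
def signedGen : Matrix (Ind m n) (Ind m n) ST.T :=
  signedMatrix pI fun a b => ST.inU (gen pI a b)

lemma superWeylRelations :
    SuperWeylRelations ℂ pI (ST.inD ∘ tdiv) (ST.inD ∘ tpar ∘ emb) (ST.inD (tpar z0)) :=
  superWeylRelations_tdiv_tpar.map ST.inD

lemma signedGen_koszulCommutes_tdiv (k : Ind m n) :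
    KoszulCommutes ℂ pI ST.signedGen (pI k) (ST.inD (tdiv k)) := fun i j => by
  simp [signedGen, signedMatrix, ST.comm_div, smul_comm ((-1 : ℂ) ^ pI j)]

lemma signedGen_koszulCommutes_tpar (k : Ind (m + 1) n) :
    KoszulCommutes ℂ pI ST.signedGen (pI k) (ST.inD (tpar k)) := fun i j => by
  simp [signedGen, signedMatrix, ST.comm_par, smul_comm ((-1 : ℂ) ^ pI j)]

lemma inD_En : ST.inD (En m n) =
    eulerOperator (ST.inD ∘ tdiv) (ST.inD ∘ tpar ∘ emb) (ST.inD (tpar z0)) := by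
  simp [En_eq_eulerOperator, eulerOperator]

lemma R2elt_eq_dotProduct : R2elt ST =
    derivRow ℂ pI (ST.inD ∘ tpar ∘ emb) (ST.inD (tpar z0)) ⬝ᵥ coordCol (ST.inD ∘ tdiv) := by
  rw [ST.superWeylRelations.derivRow_dotProduct_coordCol, ← inD_En, sum_neg_one_pow_pI, R2elt]

lemma signedGen_mul_tdiv (a j : Ind m n) : ST.signedGen a j * ST.inD (tdiv j) =
    ((-1 : ℂ) ^ (pI a * pI j)) • (ST.inD (tdiv j) * ST.inU (gen pI a j)) := by
  rw [signedGen, signedMatrix, of_apply, smul_mul_assoc, ST.comm_div, smul_smul, ← pow_add]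
  congr 1
  exact neg_one_pow_congr (by grind)

end SuperTensor

lemma IsPhi.signedMatrix_submatrix {m n : ℕ} {ST : SuperTensor m n} {R : ST.T}
    {φ : UEA (Ind (m + 1) n) pI →ₐ[ℂ] ST.T} (hφ : IsPhi ST R φ) :
    (signedMatrix pI fun a b => φ (gen pI a b)).submatrix (optionIndEquiv m n)
        (optionIndEquiv m n) =
      scalar _ R + homMatrix ℂ pI (ST.inD ∘ tdiv) (ST.inD ∘ tpar ∘ emb) (ST.inD (tpar z0))
        ST.signedGen := by
  obtain ⟨map_emb_emb, map_emb_z0, map_z0_emb, map_z0_z0⟩ := hφ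
  ext (_ | a) (_ | b)
  · simp [signedMatrix, optionIndEquiv, homMatrix, affineLift_apply, vecMulVec_apply, coordCol,
      derivRow, map_z0_z0, tdel, tdivB_z0, pI_z0, add_comm]
  · simp [signedMatrix, optionIndEquiv, homMatrix, affineLift_apply, vecMulVec_apply, coordCol,
      derivRow, map_z0_emb, tdel, tdivB_z0, pI_emb]
  · simp [signedMatrix, optionIndEquiv, homMatrix, affineLift_apply, vecMulVec_apply, coordCol,
      derivRow, map_emb_z0, tdel, tdivB_emb, pI_z0, ST.signedGen_mul_tdiv, sub_eq_add_neg]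
  · have sign_R : ((-1 : ℂ) ^ pI b) • (if a = b then ((-1 : ℂ) ^ (pI a * pI b)) • R else 0) =
        if a = b then R else 0 := by
      split_ifs with hab
      · subst hab
        rw [smul_smul, ← pow_add, (show Even (pI a + pI a * pI a) by grind).neg_one_pow, one_smul]
      · exact smul_zero _
    simp [signedMatrix, optionIndEquiv, homMatrix, affineLift_apply, vecMulVec_apply, coordCol,
      derivRow, map_emb_emb, tdel, tdivB_emb, pI_emb, SuperTensor.signedGen, sign_R, diagonal_apply]
    abel

/-- Theorem 5.6.  For every positive integer `k`,
`φ_R(G_k^{gl(m+1|n)}) = A_k(1)(E⊗1) + (m+1−n)R^k + Σ_{g=0}^{k−1} C(k,g) R^g (1⊗G_{k−g})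
− Σ_{s=2}^{k} (1⊗G_{s−1}) A_k(s)`. -/
theorem stmt15 (m n : ℕ) (ST : SuperTensor m n) (R : ST.T)
    (hR : R ∈ Subalgebra.center ℂ ST.T)
    (φ : UEA (Ind (m+1) n) pI →ₐ[ℂ] ST.T) (hφ : IsPhi ST R φ)
    (k : ℕ) (hk : 0 < k) :
    φ (gelf (ι := Ind (m+1) n) (gen pI) pI k) =
      AkT ST R k 1 * ST.inD (En m n)
      + ((m : ℂ) + 1 - n) • R ^ k
      + ∑ g ∈ Finset.range k, (k.choose g : ℂ) •
          (R ^ g * ST.inU (gelf (ι := Ind m n) (gen pI) pI (k - g)))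
      - ∑ s ∈ Finset.Icc 2 k, ST.inU (gelf (ι := Ind m n) (gen pI) pI (s - 1)) * AkT ST R k s := by
  have R_central : ∀ a, Commute R a := fun a => ((Subalgebra.mem_center_iff.1 hR) a).symm
  have AkT_eq (s : ℕ) : AkT ST R k s = truncatedBinomial ℂ R (R2elt ST) k s := rfl
  have inU_gelf (l : ℕ) : ST.inU (gelf (gen pI) pI l) = superTrace ℂ pI (ST.signedGen ^ l) :=
    map_gelf ST.inU _ _ _
  simp only [AkT_eq, inU_gelf, ST.R2elt_eq_dotProduct, ST.inD_En]
  rw [map_gelf, ← superTrace_submatrix_equiv ℂ pI (optionIndEquiv m n), ← submatrix_equiv_pow,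
    hφ.signedMatrix_submatrix, pI_comp_optionIndEquiv,
    ST.superWeylRelations.superTrace_scalar_add_homMatrix_pow ST.signedGen_koszulCommutes_tdiv
      (fun a => pI_emb a ▸ ST.signedGen_koszulCommutes_tpar (emb a))
      (ST.signedGen_koszulCommutes_tpar z0) R_central hk, sum_neg_one_pow_homParity]
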